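/- arXiv:1406.1026 — 3 statements merged into one kernel-verified Lean document; each statement's English description precedes it below -/
import Mathlib

section
/- Let X be an infinite-dimensional reflexive real Banach space with topological dual X*, and let T : X → X* be a continuous potential operator. Assume that T is closed (it maps closed subsets of X to closed subsets of X*), that T is not monotone, that the functional J_T is sequentially weakly lower semicontinuous, and that J_T + φ is coercive for every φ ∈ X*. Then the set S_T of singular points of T is not σ-compact. -/
open Filter Topology Set NormedSpace

/-- `T` is a local homeomorphism at `x₀`: there are a neighbourhood `U` of `x₀` and a
neighbourhood `V` of `T x₀` such that the restriction of `T` to `U` is a homeomorphism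
between `U` and `V`. -/
def IsLocalHomeoAt {Z W : Type*} [TopologicalSpace Z] [TopologicalSpace W]
    (T : Z → W) (x₀ : Z) : Prop :=
  ∃ U ∈ 𝓝 x₀, ∃ V ∈ 𝓝 (T x₀), ∃ h : U ≃ₜ V, ∀ u : U, (h u : W) = T u

/-!
In an infinite-dimensional space a σ-compact set `B` is so small that any compact family of points
off `B` can be joined by segments to a common apex without meeting `B`; in particular `Bᶜ` is simply
connected. If the singular set `S` of a closed map `T` were σ-compact, `T` would be proper, hence a
finite covering over the simply connected set `(T '' S)ᶜ` with path-connected total space, hence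
injective there. The minimiser of `J - T x`, being a solution `w` of `T w = T x`, is then `x` itself
for all `x` off the σ-compact set `T ⁻¹' (T '' S)`. By density `T x` is a subgradient of `J` at
every `x`, so `T` is monotone.
-/

open unitInterval Path.Homotopic.Quotient in
theorem path_homotopic_refl_of_homotopy_const {Y : Type*} [TopologicalSpace Y] {x c : Y}
    {γ : Path x x} (H : γ.toContinuousMap.Homotopy (.const I c))
    (hloop : ∀ s, H (s, 0) = H (s, 1)) : γ.Homotopic (.refl x) := by
  let δ : Path x c := (H.evalAt 0).cast γ.source.symm rfl
  have hδ : δ = (H.evalAt 1).cast γ.target.symm rfl := by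
    ext s
    exact hloop s
  have hγδ : (γ.trans δ).Homotopic (δ.trans (.refl c)) := by
    convert! (Path.Homotopic.map_trans_evalAt H path01).pathCast γ.source.symm rfl using 1
    rw [hδ]
    rfl
  rw [← eq] at hγδ ⊢
  calc mk γ = trans (mk (γ.trans δ)) (symm (mk δ)) := by simp
    _ = mk (.refl x) := by rw [hγδ]; simp

theorem injective_of_isCoveringMap {E Y : Type*} [TopologicalSpace E] [TopologicalSpace Y]
    [PathConnectedSpace E] [SimplyConnectedSpace Y] {p : E → Y} (hp : IsCoveringMap p) :
    Function.Injective p := by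
  intro x y hxy
  let γ := Path.Homotopic.Quotient.mk (PathConnectedSpace.somePath x y)
  have monodromy_eq := hp.monodromy_eq_of_map_eq (γ := .refl (p x)) (ex := ⟨x, rfl⟩)
    (ey := ⟨y, hxy.symm⟩) γ (Subsingleton.elim _ _)
  rw [hp.monodromy_refl] at monodromy_eq
  exact congrArg Subtype.val monodromy_eq

section ComplementOfSigmaCompact

variable {E : Type*} [AddCommGroup E] [Module ℝ E] [TopologicalSpace E] [IsTopologicalAddGroup E]
  [ContinuousSMul ℝ E] [T2Space E]

theorem interior_eq_empty_of_isCompact (hE : ¬ FiniteDimensional ℝ E) {K : Set E}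
    (hK : IsCompact K) : interior K = ∅ := by
  let : UniformSpace E := IsTopologicalAddGroup.rightUniformSpace E
  have : IsUniformAddGroup E := isUniformAddGroup_of_addCommGroup
  refine eq_empty_of_forall_notMem fun x hx ↦ hE ?_
  exact .of_totallyBounded_nhds ℝ (mem_interior_iff_mem_nhds.1 hx) hK.totallyBounded

variable [BaireSpace E]

theorem dense_compl_of_isSigmaCompact (hE : ¬ FiniteDimensional ℝ E) {B : Set E}
    (hB : IsSigmaCompact B) : Dense Bᶜ := by
  obtain ⟨K, hK, rfl⟩ := hB
  rw [compl_iUnion]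
  refine dense_iInter_of_isOpen (fun n ↦ (hK n).isClosed.isOpen_compl) fun n ↦ ?_
  rw [← interior_eq_empty_iff_dense_compl]
  exact interior_eq_empty_of_isCompact hE (hK n)

theorem exists_forall_lineMap_notMem_of_isSigmaCompact (hE : ¬ FiniteDimensional ℝ E)
    {A : Type*} [TopologicalSpace A] [SigmaCompactSpace A] {B : Set E} (hB : IsSigmaCompact B)
    {γ : A → E} (hγ : Continuous γ) (hγB : ∀ a, γ a ∉ B) :
    ∃ c, ∀ a (s : ℝ), AffineMap.lineMap (γ a) c s ∉ B := by
  have : SigmaCompactSpace B := isSigmaCompact_iff_sigmaCompactSpace.1 hB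
  -- A point `c` fails only if it lies on a line through some `γ a` and some `b ∈ B`, and
  -- those lines sweep out a σ-compact set.
  let ray (q : B × A × ℝ) : E := AffineMap.lineMap (γ q.2.1) (q.1 : E) q.2.2
  have continuous_ray : Continuous ray := by
    simp only [ray, AffineMap.lineMap_apply_module]
    fun_prop
  obtain ⟨c, hc⟩ :=
    (dense_compl_of_isSigmaCompact hE (isSigmaCompact_range continuous_ray)).nonempty
  refine ⟨c, fun a s hmem ↦ ?_⟩
  rcases eq_or_ne s 0 with rfl | hs
  · exact hγB a (by simpa using hmem)
  · refine hc ⟨(⟨_, hmem⟩, a, s⁻¹), ?_⟩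
    simp [ray, AffineMap.lineMap_apply, hs]

theorem isPathConnected_compl_of_isSigmaCompact (hE : ¬ FiniteDimensional ℝ E) {B : Set E}
    (hB : IsSigmaCompact B) : IsPathConnected Bᶜ := by
  refine isPathConnected_iff.2 ⟨(dense_compl_of_isSigmaCompact hE hB).nonempty, fun x hx y hy ↦ ?_⟩
  obtain ⟨c, hc⟩ := exists_forall_lineMap_notMem_of_isSigmaCompact hE hB
    (γ := fun b : Bool ↦ cond b x y) continuous_of_discreteTopology
    (by rintro (_ | _) <;> assumption)
  have joinedIn_apex (b : Bool) : JoinedIn Bᶜ (cond b x y) c := by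
    refine .ofLine (f := AffineMap.lineMap (cond b x y) c)
      AffineMap.lineMap_continuous.continuousOn (by simp) (by simp) ?_
    rintro _ ⟨s, -, rfl⟩
    exact hc b s
  exact (joinedIn_apex true).trans (joinedIn_apex false).symm

theorem isSimplyConnected_compl_of_isSigmaCompact (hE : ¬ FiniteDimensional ℝ E) {B : Set E}
    (hB : IsSigmaCompact B) : IsSimplyConnected Bᶜ := by
  refine simply_connected_iff_loops_nullhomotopic.2
    ⟨isPathConnected_iff_pathConnectedSpace.1 (isPathConnected_compl_of_isSigmaCompact hE hB),
      fun x γ ↦ ?_⟩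
  obtain ⟨c, hc⟩ := exists_forall_lineMap_notMem_of_isSigmaCompact hE hB
    (continuous_subtype_val.comp γ.continuous) fun t ↦ (γ t).2
  let contraction : γ.toContinuousMap.Homotopy
      (.const unitInterval (⟨c, by simpa using hc 0 1⟩ : (Bᶜ : Set E))) :=
    { toFun := fun q ↦ ⟨AffineMap.lineMap (γ q.2 : E) c (q.1 : ℝ), hc q.2 q.1⟩
      continuous_toFun := by
        simp only [AffineMap.lineMap_apply_module]
        fun_prop
      map_zero_left := fun t ↦ Subtype.ext (by simp)
      map_one_left := fun t ↦ Subtype.ext (by simp) }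
  refine path_homotopic_refl_of_homotopy_const contraction fun s ↦ Subtype.ext ?_
  change AffineMap.lineMap (γ 0 : E) c (s : ℝ) = AffineMap.lineMap (γ 1 : E) c (s : ℝ)
  rw [γ.source, γ.target]

theorem injOn_preimage_compl_of_isSigmaCompact {F : Type*} [AddCommGroup F] [Module ℝ F]
    [TopologicalSpace F] [IsTopologicalAddGroup F] [ContinuousSMul ℝ F] [T2Space F] [BaireSpace F]
    (hE : ¬ FiniteDimensional ℝ E) (hF : ¬ FiniteDimensional ℝ F)
    {T : E → F} {B : Set F} (hB : IsSigmaCompact B) (hTB : IsSigmaCompact (T ⁻¹' B))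
    (hcover : IsCoveringMapOn T Bᶜ) : InjOn T (T ⁻¹' Bᶜ) := by
  have : PathConnectedSpace (T ⁻¹' Bᶜ) :=
    isPathConnected_iff_pathConnectedSpace.1 (isPathConnected_compl_of_isSigmaCompact hE hTB)
  have : SimplyConnectedSpace (Bᶜ : Set F) := isSimplyConnected_compl_of_isSigmaCompact hF hB
  intro x hx y hy hxy
  have hrestrict : (Bᶜ).restrictPreimage T ⟨x, hx⟩ = (Bᶜ).restrictPreimage T ⟨y, hy⟩ :=
    Subtype.ext hxy
  exact congrArg Subtype.val
    (injective_of_isCoveringMap hcover.isCoveringMap_restrictPreimage hrestrict)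

end ComplementOfSigmaCompact

section ClosedMaps

variable {Z W : Type*} [TopologicalSpace Z] [TopologicalSpace W] {T : Z → W}

theorem exists_subseq_tendsto_of_isClosedMap [FirstCountableTopology Z] [T1Space W]
    (hT : Continuous T) (hclosed : IsClosedMap T) {y : W} {v : ℕ → Z}
    (hv : Tendsto (T ∘ v) atTop (𝓝 y)) (hvy : ∀ n, T (v n) ≠ y) :
    ∃ a, ∃ k : ℕ → ℕ, StrictMono k ∧ Tendsto (v ∘ k) atTop (𝓝 a) := by
  obtain ⟨a, ha, rfl⟩ : y ∈ T '' closure (range v) :=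
    (hclosed _ isClosed_closure).mem_of_tendsto hv <|
      .of_forall fun n ↦ mem_image_of_mem _ (subset_closure (mem_range_self n))
  refine ⟨a, MapClusterPt.tendsto_subseq (mapClusterPt_iff_frequently.2 fun s hs ↦
    frequently_atTop.2 fun N ↦ ?_)⟩
  have hfinite : (T '' (v '' Iio N)).Finite := ((finite_Iio N).image v).image T
  have havoid : T ⁻¹' (T '' (v '' Iio N))ᶜ ∈ 𝓝 a := by
    refine (hfinite.isClosed.isOpen_compl.preimage hT).mem_nhds ?_
    rintro ⟨_, ⟨n, -, rfl⟩, hn⟩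
    exact hvy n hn
  obtain ⟨_, ⟨hns, hnN⟩, ⟨n, rfl⟩⟩ := mem_closure_iff_nhds.1 ha _ (inter_mem hs havoid)
  exact ⟨n, not_lt.1 fun hlt ↦ hnN (mem_image_of_mem T (mem_image_of_mem v hlt)), hns⟩

/-- Väinšteĭn's lemma. -/
theorem isCompact_frontier_preimage_singleton [TopologicalSpace.PseudoMetrizableSpace Z]
    [FirstCountableTopology W] [T1Space W] (hT : Continuous T) (hclosed : IsClosedMap T) (y : W) :
    IsCompact (frontier (T ⁻¹' {y})) := by
  let : PseudoMetricSpace Z := TopologicalSpace.pseudoMetrizableSpacePseudoMetric Z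
  refine isCompact_iff_isSeqCompact.2 fun u hu ↦ ?_
  have hTu (n : ℕ) : T (u n) = y :=
    (isClosed_singleton.preimage hT).frontier_subset (hu n)
  obtain ⟨ε, -, hε, hε0⟩ := exists_seq_strictAnti_tendsto (0 : ℝ)
  obtain ⟨V, hV⟩ := (𝓝 y).exists_antitone_basis
  have hnear (n : ℕ) : ∃ v, T v ≠ y ∧ dist (u n) v < ε n ∧ T v ∈ V n := by
    have hmem : Metric.ball (u n) (ε n) ∩ T ⁻¹' V n ∈ 𝓝 (u n) :=
      inter_mem (Metric.ball_mem_nhds _ (hε n))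
        (hT.continuousAt.preimage_mem_nhds (by rw [hTu n]; exact hV.mem n))
    have hclosure : u n ∈ closure (T ⁻¹' {y})ᶜ :=
      frontier_subset_closure (by rw [frontier_compl]; exact hu n)
    obtain ⟨v, ⟨hvε, hvV⟩, hvy⟩ := mem_closure_iff_nhds.1 hclosure _ hmem
    exact ⟨v, hvy, Metric.mem_ball'.1 hvε, hvV⟩
  choose v hvy hdist hvV using hnear
  obtain ⟨a, k, hk, hva⟩ := exists_subseq_tendsto_of_isClosedMap hT hclosed (hV.tendsto hvV) hvy
  have hdist0 : Tendsto (fun n ↦ dist (u (k n)) (v (k n))) atTop (𝓝 0) :=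
    (squeeze_zero (fun _ ↦ dist_nonneg) (fun n ↦ (hdist n).le) hε0).comp hk.tendsto_atTop
  have hua : Tendsto (u ∘ k) atTop (𝓝 a) := (tendsto_iff_of_dist hdist0).2 hva
  exact ⟨a, isClosed_frontier.mem_of_tendsto hua (.of_forall fun n ↦ hu (k n)), k, hk, hua⟩

theorem isProperMap_of_isClosedMap_of_interior_fiber_eq_empty
    [TopologicalSpace.PseudoMetrizableSpace Z] [FirstCountableTopology W] [T1Space W]
    (hT : Continuous T) (hclosed : IsClosedMap T) (hfiber : ∀ y, interior (T ⁻¹' {y}) = ∅) :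
    IsProperMap T := by
  refine isProperMap_iff_isClosedMap_and_compact_fibers.2 ⟨hT, hclosed, fun {y} ↦ ?_⟩
  have hfrontier := isCompact_frontier_preimage_singleton hT hclosed y
  rwa [(isClosed_singleton.preimage hT).frontier_eq, hfiber y, sdiff_empty] at hfrontier

theorem isSigmaCompact_preimage_of_isProperMap (hT : IsProperMap T) {B : Set W}
    (hB : IsSigmaCompact B) : IsSigmaCompact (T ⁻¹' B) := by
  obtain ⟨K, hK, rfl⟩ := hB
  rw [preimage_iUnion]
  exact isSigmaCompact_iUnion_of_isCompact _ fun n ↦ hT.isCompact_preimage (hK n)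

end ClosedMaps

section SingularSet

variable {Z W : Type*} [TopologicalSpace Z] [TopologicalSpace W] {T : Z → W}

/-- The set `S_T` of singular points of `T`. -/
def singularSet (T : Z → W) : Set Z :=
  {x | ¬ IsLocalHomeoAt T x}

namespace IsLocalHomeoAt

theorem exists_injOn {x : Z} (h : IsLocalHomeoAt T x) : ∃ U ∈ 𝓝 x, InjOn T U := by
  obtain ⟨U, hU, V, -, e, he⟩ := h
  refine ⟨U, hU, fun a ha b hb hab ↦ ?_⟩
  have heab : e ⟨a, ha⟩ = e ⟨b, hb⟩ := Subtype.ext (by rw [he, he]; exact hab)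
  exact congrArg Subtype.val (e.injective heab)

theorem exists_isOpenEmbedding_domRestrict {x : Z} (h : IsLocalHomeoAt T x) :
    ∃ O ∈ 𝓝 x, IsOpenEmbedding (O.domRestrict T) := by
  obtain ⟨U, hU, V, hV, e, he⟩ := h
  have hemb : IsEmbedding (U.domRestrict T) := by
    rw [show U.domRestrict T = Subtype.val ∘ e from funext fun u ↦ (he u).symm]
    exact IsEmbedding.subtypeVal.comp e.isEmbedding
  have map_nhds_eq {z : Z} (hzU : U ∈ 𝓝 z) (hzV : V ∈ 𝓝 (T z)) : map T (𝓝 z) = 𝓝 (T z) := by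
    have hz : z ∈ U := mem_of_mem_nhds hzU
    have hez : (e ⟨z, hz⟩ : W) = T z := he _
    rw [← map_nhds_subtype_coe_eq_nhds hz hzU, map_map,
      show T ∘ Subtype.val = Subtype.val ∘ e from funext fun u ↦ (he u).symm, ← map_map,
      e.map_nhds_eq, map_nhds_subtype_val, hez, nhdsWithin_eq_nhds.2 hzV]
  have hOU : interior U ∩ T ⁻¹' interior V ⊆ U := inter_subset_left.trans interior_subset
  have hO : IsOpen (interior U ∩ T ⁻¹' interior V) :=
    ((continuousOn_iff_continuous_domRestrict.2 hemb.continuous).mono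
      interior_subset).isOpen_inter_preimage isOpen_interior isOpen_interior
  refine ⟨_, hO.mem_nhds ⟨mem_interior_iff_mem_nhds.2 hU, mem_interior_iff_mem_nhds.2 hV⟩,
    hemb.comp (.inclusion hOU), ?_⟩
  rw [range_domRestrict, isOpen_iff_mem_nhds]
  rintro _ ⟨z, hz, rfl⟩
  rw [← map_nhds_eq (mem_interior_iff_mem_nhds.1 hz.1) (mem_interior_iff_mem_nhds.1 hz.2)]
  exact image_mem_map (hO.mem_nhds hz)

end IsLocalHomeoAt

theorem isLocalHomeomorphOn_compl_singularSet : IsLocalHomeomorphOn T (singularSet T)ᶜ :=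
  (isLocalHomeomorphOn_iff_isOpenEmbedding_restrict _).2 fun _ hx ↦
    (not_not.1 hx).exists_isOpenEmbedding_domRestrict

theorem interior_preimage_singleton_subset_singularSet [∀ x : Z, (𝓝[≠] x).NeBot] (y : W) :
    interior (T ⁻¹' {y}) ⊆ singularSet T := by
  intro x hx hlocal
  obtain ⟨U, hU, hinj⟩ := hlocal.exists_injOn
  obtain ⟨z, hzx, hzU, hzy⟩ := Filter.nonempty_of_mem (f := 𝓝[≠] x)
    (inter_mem_nhdsWithin {x}ᶜ (inter_mem hU (mem_interior_iff_mem_nhds.1 hx)))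
  have hxy : x ∈ T ⁻¹' {y} := interior_subset hx
  exact hzx (hinj hzU (mem_of_mem_nhds hU) (Eq.trans hzy hxy.symm))

theorem isCoveringMapOn_compl_image_singularSet [T2Space Z] (hT : IsProperMap T) :
    IsCoveringMapOn T (T '' singularSet T)ᶜ := by
  have hlocal : IsLocalHomeomorphOn T (T ⁻¹' (T '' singularSet T)ᶜ) :=
    isLocalHomeomorphOn_compl_singularSet.mono fun x hx hmem ↦ hx (mem_image_of_mem T hmem)
  refine hT.isClosedMap.isCoveringMapOn_of_isLocalHomeomorphOn (fun y hy ↦ ?_) hlocal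
  refine (hT.isCompact_preimage isCompact_singleton).finite
    (.of_openPartialHomeomorph T subset_rfl fun x hx ↦ ?_)
  obtain ⟨e, hxe, heT⟩ := hlocal x (by rwa [mem_preimage, show T x = y from hx])
  exact ⟨e, hxe, heT.symm⟩

theorem isProperMap_of_isClosedMap_of_isSigmaCompact_singularSet
    {E : Type*} [AddCommGroup E] [Module ℝ E] [TopologicalSpace E] [IsTopologicalAddGroup E]
    [ContinuousSMul ℝ E] [TopologicalSpace.MetrizableSpace E] [BaireSpace E]
    [FirstCountableTopology W] [T1Space W] {T : E → W}
    (hE : ¬ FiniteDimensional ℝ E) (hT : Continuous T) (hclosed : IsClosedMap T)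
    (hS : IsSigmaCompact (singularSet T)) : IsProperMap T := by
  have : Nontrivial E := not_subsingleton_iff_nontrivial.1 fun _ ↦ hE inferInstance
  have (x : E) : (𝓝[≠] x).NeBot := Module.punctured_nhds_neBot ℝ E x
  have hSint : interior (singularSet T) = ∅ :=
    interior_eq_empty_iff_dense_compl.2 (dense_compl_of_isSigmaCompact hE hS)
  refine isProperMap_of_isClosedMap_of_interior_fiber_eq_empty hT hclosed fun y ↦ ?_
  exact subset_empty_iff.1 <| hSint ▸
    interior_maximal (interior_preimage_singleton_subset_singularSet y) isOpen_interior

end SingularSet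

section WeakCompactness

variable {X : Type*} [NormedAddCommGroup X] [NormedSpace ℝ X]

theorem isCompact_closure_toWeakSpace_image
    (hrefl : Function.Surjective (inclusionInDoubleDual ℝ X)) {s : Set X}
    (hs : Bornology.IsBounded s) : IsCompact (closure (toWeakSpace ℝ X '' s)) := by
  refine isCompact_closure_of_isBounded ℝ X _ ?_ fun Φ _ ↦ ?_
  · rwa [preimage_image_eq _ (toWeakSpace ℝ X).injective]
  · obtain ⟨x, hx⟩ := hrefl (WeakDual.toStrongDual Φ)
    exact ⟨toWeakSpace ℝ X x, hx⟩

theorem exists_seq_dual_separating {s : Set X} (hs : TopologicalSpace.IsSeparable s) :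
    ∃ f : ℕ → StrongDual ℝ X, ∀ x ∈ s, (∀ n, f n x = 0) → x = 0 := by
  obtain ⟨c, hc, hsc⟩ := hs
  rcases c.eq_empty_or_nonempty with rfl | hne
  · rw [closure_empty, subset_empty_iff] at hsc
    simp [hsc]
  obtain ⟨d, rfl⟩ := hc.exists_eq_range hne
  choose f hf_norm hf using fun n ↦ exists_dual_vector'' ℝ (d n)
  refine ⟨f, fun x hx hfx ↦ norm_le_zero_iff.1 (le_of_forall_pos_le_add fun ε hε ↦ ?_)⟩
  obtain ⟨_, ⟨n, rfl⟩, hn⟩ := Metric.mem_closure_iff.1 (hsc hx) (ε / 2) (half_pos hε)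
  rw [dist_eq_norm] at hn
  have hdn : ‖d n‖ ≤ ‖x - d n‖ :=
    calc ‖d n‖ = -f n (x - d n) := by simp [hf, hfx]
      _ ≤ ‖f n (x - d n)‖ := neg_le_abs _
      _ ≤ ‖x - d n‖ := by simpa using (f n).le_of_opNorm_le (hf_norm n) (x - d n)
  linarith [norm_sub_norm_le x (d n)]

theorem continuous_dual_comp_toWeakSpace_symm (f : StrongDual ℝ X) :
    Continuous fun x ↦ f ((toWeakSpace ℝ X).symm x) :=
  WeakBilin.eval_continuous _ f

theorem metrizableSpace_of_isCompact_weakSpace {K : Set (WeakSpace ℝ X)} (hK : IsCompact K)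
    (hsep : TopologicalSpace.IsSeparable ((toWeakSpace ℝ X).symm '' K)) :
    TopologicalSpace.MetrizableSpace K := by
  have : CompactSpace K := isCompact_iff_compactSpace.1 hK
  obtain ⟨f, hf⟩ := exists_seq_dual_separating (hsep.span (R := ℝ))
  refine Metric.PiNatEmbed.TopologicalSpace.MetrizableSpace.of_countable_separating
    (fun n (x : K) ↦ f n ((toWeakSpace ℝ X).symm x))
    (fun n ↦ (continuous_dual_comp_toWeakSpace_symm (f n)).comp continuous_subtype_val)
    fun x y hxy ↦ ?_
  by_contra! hfxy
  have hmem (z : K) : (toWeakSpace ℝ X).symm z ∈ Submodule.span ℝ ((toWeakSpace ℝ X).symm '' K) :=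
    Submodule.subset_span (mem_image_of_mem _ z.2)
  have hsub := hf _ (sub_mem (hmem x) (hmem y)) fun n ↦ by rw [map_sub, hfxy n, sub_self]
  exact hxy (Subtype.ext ((toWeakSpace ℝ X).symm.injective (sub_eq_zero.1 hsub)))

theorem exists_subseq_forall_tendsto_dual (hrefl : Function.Surjective (inclusionInDoubleDual ℝ X))
    {u : ℕ → X} (hu : Bornology.IsBounded (range u)) :
    ∃ (x : X) (k : ℕ → ℕ), StrictMono k ∧
      ∀ f : StrongDual ℝ X, Tendsto (fun n ↦ f (u (k n))) atTop (𝓝 (f x)) := by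
  let M : Submodule ℝ X := .span ℝ (range u)
  let K : Set (WeakSpace ℝ X) := closure (toWeakSpace ℝ X '' range u)
  have hK : IsCompact K := isCompact_closure_toWeakSpace_image hrefl hu
  have hKM : (toWeakSpace ℝ X).symm '' K ⊆ closure M := by
    rw [image_subset_iff, ← LinearEquiv.image_eq_preimage_symm, M.convex.toWeakSpace_closure ℝ]
    exact closure_mono (image_mono Submodule.subset_span)
  have hsep : TopologicalSpace.IsSeparable ((toWeakSpace ℝ X).symm '' K) :=
    ((countable_range u).isSeparable.span (R := ℝ)).closure.mono hKM
  have : CompactSpace K := isCompact_iff_compactSpace.1 hK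
  have : TopologicalSpace.MetrizableSpace K := metrizableSpace_of_isCompact_weakSpace hK hsep
  obtain ⟨x, k, hk, hx⟩ := CompactSpace.tendsto_subseq fun n ↦
    (⟨_, subset_closure (mem_image_of_mem _ (mem_range_self n))⟩ : K)
  refine ⟨(toWeakSpace ℝ X).symm x, k, hk, fun f ↦ ?_⟩
  exact (((continuous_dual_comp_toWeakSpace_symm f).comp continuous_subtype_val).tendsto x).comp hx

end WeakCompactness

section Minimizers

theorem exists_seq_forall_eventually_lt {α : Type*} [Nonempty α] (f : α → ℝ) :
    ∃ u : ℕ → α, ∀ z b, f z < b → ∀ᶠ n in atTop, f (u n) < b := by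
  -- The infimum is taken in `EReal` since `f` may be unbounded below.
  obtain ⟨v, -, hv, hvmem⟩ := exists_seq_tendsto_sInf
    (range_nonempty fun x ↦ (f x : EReal)) (OrderBot.bddBelow _)
  choose u hu using hvmem
  refine ⟨u, fun z b hzb ↦ ?_⟩
  have hinf_lt : sInf (range fun x ↦ (f x : EReal)) < b :=
    (sInf_le (mem_range_self z)).trans_lt (EReal.coe_lt_coe_iff.2 hzb)
  filter_upwards [hv.eventually_lt_const hinf_lt] with n hn
  exact EReal.coe_lt_coe_iff.1 ((hu n).trans_lt hn)

variable {X : Type*} [NormedAddCommGroup X] [NormedSpace ℝ X] {I : X → ℝ}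

/-- Sequential weak lower semicontinuity, with weak convergence tested on the dual. -/
def SeqWeakLowerSemicontinuous (I : X → ℝ) : Prop :=
  ∀ (u : ℕ → X) (x : X),
    (∀ φ : StrongDual ℝ X, Tendsto (fun n ↦ φ (u n)) atTop (𝓝 (φ x))) →
    ∀ b < I x, ∀ᶠ n in atTop, b < I (u n)

theorem SeqWeakLowerSemicontinuous.add_dual (hI : SeqWeakLowerSemicontinuous I)
    (φ : StrongDual ℝ X) : SeqWeakLowerSemicontinuous fun x ↦ I x + φ x := by
  intro u x hux b hb
  obtain ⟨δ, hδ, hδb⟩ : ∃ δ > 0, b = (I x - δ) + (φ x - δ) :=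
    ⟨(I x + φ x - b) / 2, by linarith, by ring⟩
  filter_upwards [hI u x hux (I x - δ) (by linarith),
    (hux φ).eventually_const_lt (show φ x - δ < φ x by linarith)] with n hIn hφn
  linarith

theorem exists_forall_le_of_coercive (hrefl : Function.Surjective (inclusionInDoubleDual ℝ X))
    (hI : SeqWeakLowerSemicontinuous I) (hcoer : Tendsto I (Bornology.cobounded X) atTop) :
    ∃ x, ∀ z, I x ≤ I z := by
  obtain ⟨u, hu⟩ := exists_seq_forall_eventually_lt I
  have hbounded : Bornology.IsBounded {x | I x ≤ I 0 + 1} := by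
    rw [Bornology.isBounded_def]
    filter_upwards [hcoer.eventually_gt_atTop (I 0 + 1)] with x hx using not_le.2 hx
  obtain ⟨N, hN⟩ := eventually_atTop.1 (hu 0 (I 0 + 1) (by linarith))
  obtain ⟨x, k, hk, hx⟩ := exists_subseq_forall_tendsto_dual hrefl (u := fun n ↦ u (n + N))
    (hbounded.subset (range_subset_iff.2 fun n ↦ (hN (n + N) (Nat.le_add_left _ _)).le))
  refine ⟨x, fun z ↦ not_lt.1 fun hzx ↦ ?_⟩
  obtain ⟨b, hzb, hbx⟩ := exists_between hzx
  have hshift : Tendsto (fun n ↦ k n + N) atTop atTop :=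
    (tendsto_add_atTop_nat N).comp hk.tendsto_atTop
  obtain ⟨n, hlt, hgt⟩ := ((hshift.eventually (hu z b hzb)).and (hI _ x hx b hbx)).exists
  exact lt_asymm hlt hgt

end Minimizers

section Potential

variable {X : Type*} [NormedAddCommGroup X] [NormedSpace ℝ X] {T : X → StrongDual ℝ X} {J : X → ℝ}

theorem eq_of_forall_sub_le {x₀ : X} {φ J' : StrongDual ℝ X} (hJ : HasFDerivAt J J' x₀)
    (hmin : ∀ z, J x₀ - φ x₀ ≤ J z - φ z) : J' = φ :=
  sub_eq_zero.1 <| IsLocalMin.hasFDerivAt_eq_zero (.of_forall hmin) (hJ.sub φ.hasFDerivAt)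

theorem forall_sub_le_of_dense (hT : Continuous T) (hJ : Continuous J) {D : Set X} (hD : Dense D)
    (h : ∀ x ∈ D, ∀ z, J x - T x x ≤ J z - T x z) (x z : X) : J x - T x x ≤ J z - T x z := by
  have hclosed : IsClosed {x | J x - T x x ≤ J z - T x z} :=
    isClosed_le (hJ.sub (hT.clm_apply continuous_id))
      (continuous_const.sub (hT.clm_apply continuous_const))
  exact closure_minimal (fun x hx ↦ h x hx z) hclosed (hD x)

theorem sub_apply_sub_nonneg_of_forall_sub_le (h : ∀ x z, J x - T x x ≤ J z - T x z) (x y : X) :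
    0 ≤ (T x - T y) (x - y) := by
  simp only [sub_apply, map_sub]
  linarith [h x y, h y x]

end Potential

theorem not_finiteDimensional_strongDual {X : Type*} [NormedAddCommGroup X] [NormedSpace ℝ X]
    (hX : ¬ FiniteDimensional ℝ X) : ¬ FiniteDimensional ℝ (StrongDual ℝ X) := fun _ ↦
  hX <| .of_injective (inclusionInDoubleDualLi (E := X) ℝ).toLinearMap
    (inclusionInDoubleDualLi ℝ).injective

theorem singular_points_not_sigmaCompact_general {X : Type*} [NormedAddCommGroup X]
    [NormedSpace ℝ X] [CompleteSpace X] (hX : ¬ FiniteDimensional ℝ X)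
    {T : X → StrongDual ℝ X} (hT : Continuous T) (hclosed : IsClosedMap T) {J : X → ℝ}
    (hJ : ∀ x, HasFDerivAt J (T x) x) (hmono : ¬ ∀ x y, 0 ≤ (T x - T y) (x - y))
    (hmin : ∀ φ : StrongDual ℝ X, ∃ x, ∀ z, J x + φ x ≤ J z + φ z) :
    ¬ IsSigmaCompact (singularSet T) := by
  intro hS
  have hproper := isProperMap_of_isClosedMap_of_isSigmaCompact_singularSet hX hT hclosed hS
  have hvalues : IsSigmaCompact (T '' singularSet T) := hS.image hT
  have hsingular := isSigmaCompact_preimage_of_isProperMap hproper hvalues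
  have hinj : InjOn T (T ⁻¹' (T '' singularSet T)ᶜ) :=
    injOn_preimage_compl_of_isSigmaCompact hX (not_finiteDimensional_strongDual hX) hvalues
      hsingular (isCoveringMapOn_compl_image_singularSet hproper)
  have minimizer_generic : ∀ x ∈ (T ⁻¹' (T '' singularSet T))ᶜ, ∀ z,
      J x - T x x ≤ J z - T x z := by
    intro x hx
    obtain ⟨w, hw⟩ := hmin (-T x)
    simp only [neg_apply, ← sub_eq_add_neg] at hw
    have hTw : T w = T x := eq_of_forall_sub_le (hJ w) hw
    rwa [hinj (by rwa [mem_preimage, hTw]) hx hTw] at hw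
  have hJcont : Continuous J := continuous_iff_continuousAt.2 fun x ↦ (hJ x).continuousAt
  exact hmono (sub_apply_sub_nonneg_of_forall_sub_le (forall_sub_le_of_dense hT hJcont
    (dense_compl_of_isSigmaCompact hX hsingular) minimizer_generic))

/-- Theorem 1 (first part): if `X` is an infinite-dimensional reflexive real Banach space and
`T : X → X*` is a closed, non-monotone, continuous potential operator whose potential `J_T` is
sequentially weakly lower semicontinuous and such that `J_T + φ` is coercive for every
`φ ∈ X*`, then the set `S_T` of singular points of `T` is not σ-compact. -/
theorem singular_points_not_sigmaCompact
    {X : Type*} [NormedAddCommGroup X] [NormedSpace ℝ X] [CompleteSpace X]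
    (hdim : ¬ FiniteDimensional ℝ X)
    (hrefl : Function.Surjective (inclusionInDoubleDual ℝ X))
    (T : X → StrongDual ℝ X)
    (hTcont : Continuous T)
    (JT : X → ℝ)
    (hJT : JT = fun x => ∫ s in (0:ℝ)..1, T (s • x) x)
    (hpot : ∀ x : X, HasFDerivAt JT (T x) x)
    (hclosed : ∀ C : Set X, IsClosed C → IsClosed (T '' C))
    (hnmono : ¬ ∀ x y : X, 0 ≤ (T x - T y) (x - y))
    (hswlsc : ∀ (u : ℕ → X) (x : X),
      (∀ φ : StrongDual ℝ X, Tendsto (fun n => φ (u n)) atTop (𝓝 (φ x))) →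
      ∀ b < JT x, ∀ᶠ n in atTop, b < JT (u n))
    (hcoer : ∀ φ : StrongDual ℝ X,
      Tendsto (fun x => JT x + φ x) (comap (fun x : X => ‖x‖) atTop) atTop) :
    ¬ IsSigmaCompact {x : X | ¬ IsLocalHomeoAt T x} :=
  singular_points_not_sigmaCompact_general hdim hTcont hclosed hpot hnmono fun φ ↦
    exists_forall_le_of_coercive hrefl (SeqWeakLowerSemicontinuous.add_dual hswlsc φ)
      (comap_norm_atTop (E := X) ▸ hcoer φ)
end

section
/- Let (X, ⟨·,·⟩) be a real Hilbert space with dim(X) ≥ 3, and let T : X → X be a compact potential operator of class C¹ such that liminf_{‖x‖→+∞} J_T(x)/‖x‖² ≥ 0 and such that, for some λ₀ ≥ 0, lim_{‖x‖→+∞} ‖x + λT(x)‖ = +∞ for every λ > λ₀. Set Γ = {(x, y) ∈ X × X : ⟨T'(x)(y), y⟩ < 0}, for each μ ∈ ℝ set A_μ = {x ∈ X : T'(x)(y) = μy for some y ∈ X \ {0}}, and, when Γ ≠ ∅, set μ̃ = max{−1/λ₀, inf_{(x,y)∈Γ} ⟨T'(x)(y), y⟩/‖y‖²}. Then the following assertions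 are equivalent: (i) T is not monotone; (ii) there exists μ < 0 such that A_μ ≠ ∅; (iii) Γ ≠ ∅ and, for each μ ∈ (μ̃, 0), the set A_μ contains an accumulation point. -/
open Filter Topology Set

/-!
Fix `μ < 0` strictly between the infimum of the Rayleigh quotients of the operators `T'(x)` and `0`,
and call `A` the set of `x` for which `μ` is an eigenvalue of `T'(x)`. Each `T'(x)` is compact (as
the derivative of a compact map) and symmetric (as a Hessian), so by the Fredholm alternative, off
`A` the form of `T'(x) - μ` is either coercive or negative in some direction. Both alternatives are
open in `x` and both occur: the second by the choice of `μ`, the first because, for `μ < ν < 0`, the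
functional `J - ν ‖·‖² / 2` is coercive and weakly lower semicontinuous, and `T'(x) ≥ ν > μ` at its
minimiser. Were `A` discrete, its complement would be dense and, in dimension at least two,
connected, which is absurd.
-/

open scoped InnerProductSpace
open Bornology Module

section DiscreteSubsets

lemma dense_compl_of_isDiscrete {E : Type*} [TopologicalSpace E] [∀ x : E, (𝓝[≠] x).NeBot]
    {S : Set E} (hS : IsDiscrete S) : Dense Sᶜ := by
  rw [← interior_eq_empty_iff_dense_compl, eq_empty_iff_forall_notMem]
  intro x hx
  have hpure : 𝓝 x = pure x := by
    rw [← nhdsWithin_eq_nhds.2 (mem_interior_iff_mem_nhds.1 hx)]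
    exact isDiscrete_iff_nhdsWithin.1 hS x (interior_subset hx)
  have hbot : 𝓝[≠] x = ⊥ := by
    rw [nhdsWithin, hpure, ← principal_singleton, inf_principal, inter_compl_self, principal_empty]
  exact NeBot.ne inferInstance hbot

lemma exists_finiteDimensional_submodule_one_lt_rank {k E : Type*} [DivisionRing k]
    [AddCommGroup E] [Module k E] (hrank : 1 < Module.rank k E) (a b : E) :
    ∃ F : Submodule k E, FiniteDimensional k F ∧ 1 < Module.rank k F ∧ a ∈ F ∧ b ∈ F := by
  obtain ⟨s, hs_card, hs_indep⟩ :=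
    (le_rank_iff_exists_linearIndependent_finset (n := 2)).1
      (mod_cast Cardinal.two_le_iff_one_lt.2 hrank)
  have hfinite : (insert a (insert b (s : Set E))).Finite := (s.finite_toSet.insert b).insert a
  refine ⟨Submodule.span k (insert a (insert b s)), FiniteDimensional.span_of_finite k hfinite, ?_,
    Submodule.subset_span (by simp), Submodule.subset_span (by simp)⟩
  calc 1 < Module.rank k (Submodule.span k (s : Set E)) := by
        rw [rank_span_set hs_indep]
        simp [hs_card]
    _ ≤ _ := Submodule.rank_mono <| Submodule.span_mono <|
        (subset_insert b _).trans (subset_insert a _)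

lemma isPreconnected_compl_of_isDiscrete {E : Type*} [NormedAddCommGroup E] [NormedSpace ℝ E]
    (hrank : 1 < Module.rank ℝ E) {S : Set E} (hS : IsDiscrete S) : IsPreconnected Sᶜ := by
  refine isPreconnected_of_forall_pair fun a ha b hb => ?_
  obtain ⟨F, _, hF_rank, haF, hbF⟩ := exists_finiteDimensional_submodule_one_lt_rank hrank a b
  have : ProperSpace F := FiniteDimensional.proper_real F
  have hcountable : (((↑) : F → E) ⁻¹' S).Countable :=
    (HereditarilyLindelofSpace.isLindelof _).countable_of_isDiscrete
      (hS.preimage continuous_subtype_val.continuousOn Subtype.val_injective)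
  have hconn := (hcountable.isPathConnected_compl_of_one_lt_rank hF_rank).isConnected.isPreconnected
  exact ⟨(↑) '' (((↑) : F → E) ⁻¹' S)ᶜ, image_subset_iff.2 Subset.rfl, ⟨⟨a, haF⟩, ha, rfl⟩,
    ⟨⟨b, hbF⟩, hb, rfl⟩, hconn.image _ continuous_subtype_val.continuousOn⟩

end DiscreteSubsets

section CompactMaps

/-- A (possibly nonlinear) compact map: bounded sets have relatively compact images. Continuity is
not part of the definition. -/
def IsCompactMap {E F : Type*} [Bornology E] [TopologicalSpace F] (T : E → F) : Prop :=
  ∀ B : Set E, IsBounded B → IsCompact (closure (T '' B))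

lemma totallyBounded_of_forall_exists_dist_lt {E : Type*} [PseudoMetricSpace E] {s : Set E}
    (h : ∀ ε > 0, ∃ t, TotallyBounded t ∧ ∀ x ∈ s, ∃ y ∈ t, dist x y < ε) :
    TotallyBounded s := by
  refine Metric.totallyBounded_iff.2 fun ε hε => ?_
  obtain ⟨t, ht, hst⟩ := h (ε / 2) (half_pos hε)
  obtain ⟨u, hu, htu⟩ := Metric.totallyBounded_iff.1 ht (ε / 2) (half_pos hε)
  refine ⟨u, hu, fun x hx => ?_⟩
  obtain ⟨y, hy, hxy⟩ := hst x hx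
  obtain ⟨z, hz, hyz⟩ := mem_iUnion₂.1 (htu hy)
  refine mem_iUnion₂.2 ⟨z, hz, ?_⟩
  rw [Metric.mem_ball] at hyz ⊢
  linarith [dist_triangle x y z]

variable {E F : Type*} [NormedAddCommGroup E] [NormedSpace ℝ E] [NormedAddCommGroup F]
  [NormedSpace ℝ F]

lemma exists_pos_forall_norm_differenceQuotient_sub_le {T : E → F} {K : E →L[ℝ] F} {x : E}
    (hT : HasFDerivAt T K x) {ε : ℝ} (hε : 0 < ε) :
    ∃ δ > (0 : ℝ), ∀ y : E, ‖y‖ ≤ 1 → ‖K y - δ⁻¹ • (T (x + δ • y) - T x)‖ ≤ ε := by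
  obtain ⟨δ, hδ, hball⟩ := Metric.nhds_basis_closedBall.eventually_iff.1
    ((hasFDerivAt_iff_isLittleO_nhds_zero.1 hT).def hε)
  refine ⟨δ, hδ, fun y hy => ?_⟩
  have hδy : ‖δ • y‖ ≤ δ := by
    rw [norm_smul, Real.norm_of_nonneg hδ.le]
    exact mul_le_of_le_one_right hδ.le hy
  calc ‖K y - δ⁻¹ • (T (x + δ • y) - T x)‖
      = ‖δ⁻¹ • (T (x + δ • y) - T x - K (δ • y))‖ := by
        rw [map_smul, smul_sub _ (T _ - T x), inv_smul_smul₀ hδ.ne', norm_sub_rev]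
    _ = δ⁻¹ * ‖T (x + δ • y) - T x - K (δ • y)‖ := by
        rw [norm_smul, Real.norm_of_nonneg (inv_nonneg.2 hδ.le)]
    _ ≤ δ⁻¹ * (ε * δ) := by
        gcongr
        exact (hball (by simpa using hδy)).trans (by gcongr)
    _ = ε := by field_simp

lemma isCompactOperator_of_hasFDerivAt [CompleteSpace F] {T : E → F} (hT : IsCompactMap T)
    {K : E →L[ℝ] F} {x : E} (hK : HasFDerivAt T K x) : IsCompactOperator K := by
  refine (isCompactOperator_iff_isCompact_closure_image_closedBall K.toLinearMap one_pos).2 ?_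
  refine TotallyBounded.isCompact_of_isClosed (TotallyBounded.closure ?_) isClosed_closure
  refine totallyBounded_of_forall_exists_dist_lt fun ε hε => ?_
  obtain ⟨δ, -, hδ⟩ := exists_pos_forall_norm_differenceQuotient_sub_le hK (half_pos hε)
  have himage : TotallyBounded (T '' ((fun y => x + δ • y) '' Metric.closedBall 0 1)) := by
    refine TotallyBounded.subset subset_closure (hT _ ?_).totallyBounded
    exact ((isCompact_singleton.isBounded.add
      (Metric.isBounded_closedBall.smul₀ δ)).subset (by
        rintro _ ⟨y, hy, rfl⟩
        exact add_mem_add rfl (smul_mem_smul_set hy)))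
  refine ⟨_, himage.image (f := fun u => δ⁻¹ • (u - T x))
    ((uniformContinuous_id.sub uniformContinuous_const).const_smul _), ?_⟩
  rintro _ ⟨y, hy, rfl⟩
  refine ⟨_, mem_image_of_mem _ (mem_image_of_mem _ (mem_image_of_mem _ hy)), ?_⟩
  rw [dist_eq_norm]
  exact (hδ y (by simpa using hy)).trans_lt (half_lt_self hε)

end CompactMaps

section SymmetricOperators

variable {X : Type*} [NormedAddCommGroup X] [InnerProductSpace ℝ X]

lemma norm_sq_le_opNorm_mul_inner_of_isPositive {P : X →L[ℝ] X} (hP : P.IsPositive) (v : X) :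
    ‖P v‖ ^ 2 ≤ ‖P‖ * ⟪P v, v⟫_ℝ := by
  have hcauchy : (‖P v‖ ^ 2) ^ 2 ≤ ⟪P v, v⟫_ℝ * ⟪P (P v), P v⟫_ℝ := by
    have h := LinearMap.BilinForm.apply_sq_le_of_symm (innerₗ X ∘ₗ P.toLinearMap)
      (fun w => hP.inner_nonneg_left w)
      ⟨fun u w => (hP.isSymmetric u w).trans (real_inner_comm _ _)⟩ v (P v)
    simpa using h
  have hop : ⟪P (P v), P v⟫_ℝ ≤ ‖P‖ * ‖P v‖ ^ 2 := by
    calc ⟪P (P v), P v⟫_ℝ ≤ ‖P (P v)‖ * ‖P v‖ := real_inner_le_norm _ _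
      _ ≤ ‖P‖ * ‖P v‖ * ‖P v‖ := by gcongr; exact P.le_opNorm _
      _ = ‖P‖ * ‖P v‖ ^ 2 := by ring
  have hnonneg : 0 ≤ ⟪P v, v⟫_ℝ := hP.inner_nonneg_left v
  rcases eq_or_ne (P v) 0 with hv | hv
  · simp [hv]
  · refine le_of_mul_le_mul_right ?_ (pow_pos (norm_pos_iff.2 hv) 2)
    calc ‖P v‖ ^ 2 * ‖P v‖ ^ 2 = (‖P v‖ ^ 2) ^ 2 := by ring
      _ ≤ ⟪P v, v⟫_ℝ * (‖P‖ * ‖P v‖ ^ 2) := hcauchy.trans (by gcongr)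
      _ = ‖P‖ * ⟪P v, v⟫_ℝ * ‖P v‖ ^ 2 := by ring

lemma inner_sub_smul_one_apply_self (K : X →L[ℝ] X) (μ : ℝ) (v : X) :
    ⟪(K - μ • 1) v, v⟫_ℝ = ⟪K v, v⟫_ℝ - μ * ‖v‖ ^ 2 := by
  simp [inner_sub_left, real_inner_smul_left]

lemma exists_lt_forall_mul_norm_sq_le_inner_of_not_hasEigenvalue {K : X →L[ℝ] X} {μ : ℝ}
    (hK : IsCompactOperator K) (hsymm : K.toLinearMap.IsSymmetric) (hμ : μ ≠ 0)
    (hle : ∀ v, μ * ‖v‖ ^ 2 ≤ ⟪K v, v⟫_ℝ) (heig : ¬ End.HasEigenvalue K.toLinearMap μ) :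
    ∃ c > μ, ∀ v, c * ‖v‖ ^ 2 ≤ ⟪K v, v⟫_ℝ := by
  obtain ⟨κ, hκ, hbelow⟩ := antilipschitzWith_iff_exists_mul_le_norm.1
    (hK.antilipschitz_of_not_hasEigenvalue hμ heig)
  set P : X →L[ℝ] X := K - μ • 1
  have hP : P.IsPositive := by
    refine ⟨fun u w => ?_, fun v => ?_⟩
    · simpa [P, inner_sub_left, inner_sub_right, real_inner_smul_left, real_inner_smul_right]
        using hsymm u w
    · rw [ContinuousLinearMap.reApplyInnerSelf_apply, RCLike.re_to_real,
        inner_sub_smul_one_apply_self]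
      exact sub_nonneg.2 (hle v)
  refine ⟨μ + κ ^ 2 / (‖P‖ + 1), lt_add_of_pos_right _ (by positivity), fun v => ?_⟩
  have hcoercive : κ ^ 2 * ‖v‖ ^ 2 ≤ (‖P‖ + 1) * ⟪P v, v⟫_ℝ := by
    calc κ ^ 2 * ‖v‖ ^ 2 = (κ * ‖v‖) ^ 2 := by ring
      _ ≤ ‖P v‖ ^ 2 := by gcongr; exact hbelow v
      _ ≤ ‖P‖ * ⟪P v, v⟫_ℝ := norm_sq_le_opNorm_mul_inner_of_isPositive hP v
      _ ≤ (‖P‖ + 1) * ⟪P v, v⟫_ℝ := by linarith [show 0 ≤ ⟪P v, v⟫_ℝ from hP.inner_nonneg_left v]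
  have hdiv : κ ^ 2 / (‖P‖ + 1) * ‖v‖ ^ 2 ≤ ⟪P v, v⟫_ℝ := by
    rw [div_mul_eq_mul_div]
    exact div_le_of_le_mul₀ (by positivity) (hP.inner_nonneg_left v) (by linarith)
  rw [inner_sub_smul_one_apply_self] at hdiv
  linarith

lemma isOpen_setOf_exists_inner_lt (μ : ℝ) :
    IsOpen {K : X →L[ℝ] X | ∃ v, ⟪K v, v⟫_ℝ < μ * ‖v‖ ^ 2} := by
  simp only [Set.ofPred_exists]
  exact isOpen_iUnion fun v => isOpen_lt (by fun_prop) continuous_const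

lemma isOpen_setOf_exists_lt_forall_mul_norm_sq_le_inner (μ : ℝ) :
    IsOpen {K : X →L[ℝ] X | ∃ c > μ, ∀ v, c * ‖v‖ ^ 2 ≤ ⟪K v, v⟫_ℝ} := by
  refine Metric.isOpen_iff.2 fun K ⟨c, hc, hK⟩ => ⟨(c - μ) / 2, by linarith, fun L hL => ?_⟩
  refine ⟨(c + μ) / 2, by linarith, fun v => ?_⟩
  have hLK : ⟪(K - L) v, v⟫_ℝ ≤ (c - μ) / 2 * ‖v‖ ^ 2 := by
    calc ⟪(K - L) v, v⟫_ℝ ≤ ‖(K - L) v‖ * ‖v‖ := real_inner_le_norm _ _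
      _ ≤ ‖K - L‖ * ‖v‖ * ‖v‖ := by gcongr; exact (K - L).le_opNorm v
      _ ≤ (c - μ) / 2 * ‖v‖ * ‖v‖ := by gcongr; exact (mem_ball_iff_norm'.1 hL).le
      _ = (c - μ) / 2 * ‖v‖ ^ 2 := by ring
  rw [_root_.sub_apply, inner_sub_left] at hLK
  linarith [hK v]

lemma exists_hasEigenvalue_of_isPreconnected {s : Set (X →L[ℝ] X)} (hs : IsPreconnected s)
    (hcompact : ∀ K ∈ s, IsCompactOperator K) (hsymm : ∀ K ∈ s, K.toLinearMap.IsSymmetric)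
    {μ : ℝ} (hμ : μ ≠ 0) (hbelow : ∃ K ∈ s, ∃ v, ⟪K v, v⟫_ℝ < μ * ‖v‖ ^ 2)
    (habove : ∃ K ∈ s, ∃ c > μ, ∀ v, c * ‖v‖ ^ 2 ≤ ⟪K v, v⟫_ℝ) :
    ∃ K ∈ s, End.HasEigenvalue K.toLinearMap μ := by
  by_contra! hno
  have hcover : s ⊆ {K | ∃ v, ⟪K v, v⟫_ℝ < μ * ‖v‖ ^ 2} ∪
      {K | ∃ c > μ, ∀ v, c * ‖v‖ ^ 2 ≤ ⟪K v, v⟫_ℝ} := by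
    refine fun K hK => or_iff_not_imp_left.2 fun hle => ?_
    simp only [mem_ofPred_eq, not_exists, not_lt] at hle
    exact exists_lt_forall_mul_norm_sq_le_inner_of_not_hasEigenvalue (hcompact K hK) (hsymm K hK)
      hμ hle (hno K hK)
  obtain ⟨K, -, ⟨v, hv⟩, c, hc, hcK⟩ := hs _ _ (isOpen_setOf_exists_inner_lt μ)
    (isOpen_setOf_exists_lt_forall_mul_norm_sq_le_inner μ) hcover hbelow habove
  nlinarith [hcK v, sq_nonneg ‖v‖]

end SymmetricOperators

section Derivatives

lemma hasDerivAt_comp_add_smul {E F : Type*} [NormedAddCommGroup E] [NormedSpace ℝ E]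
    [NormedAddCommGroup F] [NormedSpace ℝ F] {f : E → F} {f' : E →L[ℝ] F} {x v : E} {t : ℝ}
    (hf : HasFDerivAt f f' (x + t • v)) : HasDerivAt (fun s : ℝ => f (x + s • v)) (f' v) t := by
  have hline : HasDerivAt (fun s : ℝ => x + s • v) v t := by
    simpa using ((hasDerivAt_id t).smul_const v).const_add x
  exact hf.comp_hasDerivAt t hline

lemma deriv_deriv_nonneg_of_isLocalMin {f : ℝ → ℝ} {t : ℝ} (hmin : IsLocalMin f t)
    (hf : ContinuousAt f t) : 0 ≤ deriv (deriv f) t := by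
  by_contra! hneg
  have hmax : IsLocalMax f t := isLocalMax_of_deriv_deriv_neg hneg hmin.deriv_eq_zero hf
  have hconst : f =ᶠ[𝓝 t] fun _ => f t := by
    filter_upwards [hmin, hmax] with s hs_min hs_max
    exact le_antisymm hs_max hs_min
  simp [hconst.deriv.deriv_eq] at hneg

variable {X : Type*} [NormedAddCommGroup X] [InnerProductSpace ℝ X]

lemma hasDerivAt_inner_comp_add_smul {T : X → X} {T' : X →L[ℝ] X} {x v : X} {t : ℝ}
    (hT : HasFDerivAt T T' (x + t • v)) :
    HasDerivAt (fun s : ℝ => ⟪T (x + s • v), v⟫_ℝ) ⟪T' v, v⟫_ℝ t := by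
  simpa using (hasDerivAt_comp_add_smul hT).inner ℝ (hasDerivAt_const t v)

lemma forall_inner_sub_nonneg_iff_forall_inner_fderiv_nonneg {T : X → X}
    (hT : Differentiable ℝ T) :
    (∀ x y, 0 ≤ ⟪T x - T y, x - y⟫_ℝ) ↔ ∀ x v, 0 ≤ ⟪fderiv ℝ T x v, v⟫_ℝ := by
  have hderiv (x v : X) (t : ℝ) : HasDerivAt (fun s : ℝ => ⟪T (x + s • v), v⟫_ℝ)
      ⟪fderiv ℝ T (x + t • v) v, v⟫_ℝ t := hasDerivAt_inner_comp_add_smul (hT _).hasFDerivAt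
  constructor
  · intro hmono x v
    have hline : Monotone fun s : ℝ => ⟪T (x + s • v), v⟫_ℝ := by
      intro s t hst
      rcases hst.eq_or_lt with rfl | hlt
      · rfl
      · have h := hmono (x + t • v) (x + s • v)
        rw [add_sub_add_left_eq_sub, ← sub_smul, real_inner_smul_right, inner_sub_left] at h
        exact sub_nonneg.1 (nonneg_of_mul_nonneg_right h (sub_pos.2 hlt))
    have hderiv_zero := hderiv x v 0
    rw [zero_smul, add_zero] at hderiv_zero
    exact hderiv_zero.deriv ▸ hline.deriv_nonneg
  · intro hnonneg x y
    have hline : Monotone fun s : ℝ => ⟪T (y + s • (x - y)), x - y⟫_ℝ :=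
      monotone_of_hasDerivAt_nonneg (hderiv y (x - y)) fun t => hnonneg _ _
    simpa [inner_sub_left] using hline zero_le_one

variable [CompleteSpace X]

lemma isSymmetric_of_hasGradientAt {J : X → ℝ} {T : X → X} {T' : X →L[ℝ] X} {x : X}
    (hJ : ∀ y, HasGradientAt J (T y) y) (hT : HasFDerivAt T T' x) :
    T'.toLinearMap.IsSymmetric := by
  intro v w
  have hdual : HasFDerivAt (fun y => innerSL ℝ (T y)) ((innerSL ℝ).comp T') x :=
    (innerSL ℝ).hasFDerivAt.comp x hT
  have h := second_derivative_symmetric (fun y => (hJ y).hasFDerivAt) hdual v w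
  simpa [real_inner_comm] using h

lemma inner_nonneg_of_isLocalMin {φ : X → ℝ} {G : X → X} {G' : X →L[ℝ] X} {x : X}
    (hφ : ∀ y, HasGradientAt φ (G y) y) (hG : HasFDerivAt G G' x) (hmin : IsLocalMin φ x) (v : X) :
    0 ≤ ⟪G' v, v⟫_ℝ := by
  have hline (t : ℝ) : HasDerivAt (fun s : ℝ => φ (x + s • v)) ⟪G (x + t • v), v⟫_ℝ t := by
    simpa using hasDerivAt_comp_add_smul (hφ (x + t • v)).hasFDerivAt
  have hsecond : HasDerivAt (fun s : ℝ => ⟪G (x + s • v), v⟫_ℝ) ⟪G' v, v⟫_ℝ 0 :=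
    hasDerivAt_inner_comp_add_smul (by simpa using hG)
  have hmin_line : IsLocalMin (fun s : ℝ => φ (x + s • v)) 0 :=
    IsLocalMin.comp_continuous (by simpa using hmin) (by fun_prop)
  have h := deriv_deriv_nonneg_of_isLocalMin hmin_line (hline 0).continuousAt
  rwa [funext fun t => (hline t).deriv, hsecond.deriv] at h

lemma hasGradientAt_add_half_mul_norm_sq {J : X → ℝ} {g x : X} (hJ : HasGradientAt J g x) (a : ℝ) :
    HasGradientAt (fun y => J y + a / 2 * ‖y‖ ^ 2) (g + a • x) x := by
  have hsq : HasFDerivAt (fun y : X => ‖y‖ ^ 2) ((2 : ℝ) • InnerProductSpace.toDual ℝ X x) x := by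
    rw [ofNat_smul_eq_nsmul]
    exact (hasStrictFDerivAt_norm_sq x).hasFDerivAt
  refine (hJ.hasFDerivAt.add (hsq.const_mul (a / 2))).congr_fderiv ?_
  rw [smul_smul, div_mul_cancel₀ a two_ne_zero, map_add, map_smulₛₗ, conj_trivial]

end Derivatives

section DirectMethod

variable {X : Type*} [NormedAddCommGroup X] [InnerProductSpace ℝ X] [CompleteSpace X]

/-- The inverse Riesz isomorphism, read as a map from `X` with its weak topology (realised as the
weak-* dual, so that Banach–Alaoglu applies) to `X` with its norm topology. -/
noncomputable def rieszOfWeakDual (w : WeakDual ℝ X) : X :=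
  (InnerProductSpace.toDual ℝ X).symm (WeakDual.toStrongDual w)

lemma surjective_rieszOfWeakDual : Function.Surjective (rieszOfWeakDual (X := X)) :=
  (InnerProductSpace.toDual ℝ X).symm.surjective.comp WeakDual.toStrongDual.surjective

lemma continuous_inner_rieszOfWeakDual (y : X) :
    Continuous fun w : WeakDual ℝ X => ⟪rieszOfWeakDual w, y⟫_ℝ := by
  simpa [rieszOfWeakDual] using WeakDual.eval_continuous (𝕜 := ℝ) y

lemma isCompact_rieszOfWeakDual_preimage_closedBall (R : ℝ) :
    IsCompact (rieszOfWeakDual ⁻¹' Metric.closedBall (0 : X) R) := by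
  convert WeakDual.isCompact_closedBall (𝕜 := ℝ) (E := X) 0 R using 1
  ext w
  simp [rieszOfWeakDual]

lemma lowerSemicontinuous_mul_norm_sq_rieszOfWeakDual {a : ℝ} (ha : 0 ≤ a) :
    LowerSemicontinuous fun w : WeakDual ℝ X => a * ‖rieszOfWeakDual w‖ ^ 2 := by
  intro w₀ c hc
  set x₀ := rieszOfWeakDual w₀
  have htangent : Continuous fun w : WeakDual ℝ X =>
      a * (2 * ⟪rieszOfWeakDual w, x₀⟫_ℝ - ‖x₀‖ ^ 2) :=
    (((continuous_inner_rieszOfWeakDual x₀).const_mul 2).sub continuous_const).const_mul a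
  have hc' : c < a * (2 * ⟪rieszOfWeakDual w₀, x₀⟫_ℝ - ‖x₀‖ ^ 2) := by
    rw [real_inner_self_eq_norm_sq]
    linarith
  filter_upwards [htangent.continuousAt.eventually (lt_mem_nhds hc')] with w hw
  have hle : 2 * ⟪rieszOfWeakDual w, x₀⟫_ℝ - ‖x₀‖ ^ 2 ≤ ‖rieszOfWeakDual w‖ ^ 2 := by
    linarith [norm_sub_sq_real (rieszOfWeakDual w) x₀, sq_nonneg ‖rieszOfWeakDual w - x₀‖]
  exact hw.trans_le (by gcongr)

lemma eventually_forall_abs_inner_rieszOfWeakDual_sub_lt {K : Set X} (hK : TotallyBounded K)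
    {R : ℝ} {w₀ : WeakDual ℝ X} (hw₀ : rieszOfWeakDual w₀ ∈ Metric.closedBall 0 R) {ε : ℝ}
    (hε : 0 < ε) :
    ∀ᶠ w in 𝓝[rieszOfWeakDual ⁻¹' Metric.closedBall 0 R] w₀,
      ∀ k ∈ K, |⟪rieszOfWeakDual w - rieszOfWeakDual w₀, k⟫_ℝ| < ε := by
  have hR : 0 ≤ R := (norm_nonneg _).trans (mem_closedBall_zero_iff.1 hw₀)
  set η : ℝ := ε / (2 * R + 1)
  have hη : 0 < η := by positivity
  obtain ⟨t, ht, hKt⟩ := Metric.totallyBounded_iff.1 hK η hη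
  have hnet : ∀ᶠ w in 𝓝 w₀, ∀ k ∈ t, |⟪rieszOfWeakDual w - rieszOfWeakDual w₀, k⟫_ℝ| < η := by
    refine (eventually_all_finite ht).2 fun k _ => ?_
    have h := (continuous_inner_rieszOfWeakDual k).continuousAt.eventually
      (Metric.ball_mem_nhds ⟪rieszOfWeakDual w₀, k⟫_ℝ hη)
    simpa only [Metric.mem_ball, Real.dist_eq, ← inner_sub_left] using h
  filter_upwards [nhdsWithin_le_nhds hnet, self_mem_nhdsWithin] with w hw hwR k hk
  obtain ⟨k', hk', hkk'⟩ := mem_iUnion₂.1 (hKt hk)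
  set d := rieszOfWeakDual w - rieszOfWeakDual w₀
  have hd : ‖d‖ ≤ 2 * R := by
    have hwR' : ‖rieszOfWeakDual w‖ ≤ R := mem_closedBall_zero_iff.1 hwR
    linarith [norm_sub_le (rieszOfWeakDual w) (rieszOfWeakDual w₀), mem_closedBall_zero_iff.1 hw₀]
  calc |⟪d, k⟫_ℝ| = |⟪d, k - k'⟫_ℝ + ⟪d, k'⟫_ℝ| := by rw [← inner_add_right, sub_add_cancel]
    _ ≤ |⟪d, k - k'⟫_ℝ| + |⟪d, k'⟫_ℝ| := abs_add_le _ _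
    _ ≤ 2 * R * η + |⟪d, k'⟫_ℝ| := by
        gcongr
        exact (abs_real_inner_le_norm _ _).trans (by gcongr; exact (mem_ball_iff_norm.1 hkk').le)
    _ < 2 * R * η + η := by gcongr; exact hw k' hk'
    _ = ε := by simp only [η]; field_simp

lemma continuousOn_comp_rieszOfWeakDual {J : X → ℝ} {T : X → X} (hT : IsCompactMap T)
    (hJ : ∀ x, HasGradientAt J (T x) x) (R : ℝ) :
    ContinuousOn (J ∘ rieszOfWeakDual) (rieszOfWeakDual ⁻¹' Metric.closedBall 0 R) := by
  intro w₀ hw₀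
  have hbounded : TotallyBounded (T '' Metric.closedBall 0 R) :=
    TotallyBounded.subset subset_closure (hT _ Metric.isBounded_closedBall).totallyBounded
  refine Metric.tendsto_nhds.2 fun ε hε => ?_
  filter_upwards [eventually_forall_abs_inner_rieszOfWeakDual_sub_lt hbounded hw₀ hε,
    self_mem_nhdsWithin] with w hw hwR
  obtain ⟨z, hz, hmean⟩ := domain_mvt (fun x _ => (hJ x).hasFDerivAt.hasFDerivWithinAt)
    (convex_closedBall 0 R) hw₀ hwR
  have hzR := (convex_closedBall 0 R).segment_subset hw₀ hwR hz
  rw [Function.comp_apply, Function.comp_apply, Real.dist_eq, hmean,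
    InnerProductSpace.toDual_apply_apply, real_inner_comm]
  exact hw _ (mem_image_of_mem T hzR)

lemma exists_forall_le_add_mul_norm_sq {J : X → ℝ} {T : X → X} (hT : IsCompactMap T)
    (hJ : ∀ x, HasGradientAt J (T x) x) {a : ℝ} (ha : 0 ≤ a)
    (hcoercive : Tendsto (fun x => J x + a * ‖x‖ ^ 2) (cobounded X) atTop) :
    ∃ x, ∀ y, J x + a * ‖x‖ ^ 2 ≤ J y + a * ‖y‖ ^ 2 := by
  set φ : X → ℝ := fun x => J x + a * ‖x‖ ^ 2
  have hbounded : IsBounded {x | φ 0 ≤ φ x}ᶜ := by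
    rw [isBounded_def, compl_compl]
    exact hcoercive.eventually_ge_atTop (φ 0)
  obtain ⟨R, hR⟩ := hbounded.subset_closedBall 0
  obtain ⟨w₀, hw₀⟩ := surjective_rieszOfWeakDual (X := X) 0
  have hlsc : LowerSemicontinuousOn (φ ∘ rieszOfWeakDual)
      (rieszOfWeakDual ⁻¹' Metric.closedBall 0 (max R 0)) :=
    (continuousOn_comp_rieszOfWeakDual hT hJ _).lowerSemicontinuousOn.add
      ((lowerSemicontinuous_mul_norm_sq_rieszOfWeakDual ha).lowerSemicontinuousOn _)
  obtain ⟨w, -, hmin⟩ := hlsc.exists_isMinOn ⟨w₀, by simp [hw₀]⟩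
    (isCompact_rieszOfWeakDual_preimage_closedBall _)
  have hball (y : X) (hy : y ∈ Metric.closedBall 0 (max R 0)) : φ (rieszOfWeakDual w) ≤ φ y := by
    obtain ⟨u, rfl⟩ := surjective_rieszOfWeakDual y
    exact hmin hy
  refine ⟨rieszOfWeakDual w, fun y => ?_⟩
  by_cases hy : φ 0 ≤ φ y
  · exact (hball 0 (by simp)).trans hy
  · exact hball y (Metric.closedBall_subset_closedBall (le_max_left _ _) (hR hy))

lemma tendsto_add_mul_norm_sq_atTop {E : Type*} [NormedAddCommGroup E] {J : E → ℝ}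
    (hJ : ∀ ε > 0, ∀ᶠ x in cobounded E, -ε ≤ J x / ‖x‖ ^ 2) {a : ℝ} (ha : 0 < a) :
    Tendsto (fun x => J x + a * ‖x‖ ^ 2) (cobounded E) atTop := by
  have hquad : Tendsto (fun x : E => a / 2 * ‖x‖ ^ 2) (cobounded E) atTop :=
    ((tendsto_pow_atTop two_ne_zero).comp tendsto_norm_cobounded_atTop).const_mul_atTop
      (half_pos ha)
  refine tendsto_atTop_mono' _ ?_ hquad
  filter_upwards [hJ (a / 2) (half_pos ha),
    tendsto_norm_cobounded_atTop.eventually_gt_atTop 0] with x hx hx_pos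
  rw [le_div_iff₀ (by positivity)] at hx
  linarith

lemma exists_forall_mul_norm_sq_le_inner_fderiv {J : X → ℝ} {T : X → X} (hT : IsCompactMap T)
    (hdiff : Differentiable ℝ T) (hJ : ∀ x, HasGradientAt J (T x) x)
    (hliminf : ∀ ε > 0, ∀ᶠ x in cobounded X, -ε ≤ J x / ‖x‖ ^ 2) {ν : ℝ} (hν : ν < 0) :
    ∃ x, ∀ v, ν * ‖v‖ ^ 2 ≤ ⟪fderiv ℝ T x v, v⟫_ℝ := by
  have ha : 0 < -ν / 2 := by linarith
  obtain ⟨x, hx⟩ := exists_forall_le_add_mul_norm_sq hT hJ ha.le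
    (tendsto_add_mul_norm_sq_atTop hliminf ha)
  refine ⟨x, fun v => ?_⟩
  have h := inner_nonneg_of_isLocalMin (fun y => hasGradientAt_add_half_mul_norm_sq (hJ y) (-ν))
    ((hdiff x).hasFDerivAt.add ((hasFDerivAt_id x).const_smul (-ν))) (Eventually.of_forall hx) v
  simp only [_root_.add_apply, _root_.smul_apply, ContinuousLinearMap.id_apply, inner_add_left,
    real_inner_smul_left, real_inner_self_eq_norm_sq] at h
  linarith

end DirectMethod

section EigenvalueLocus

variable {X : Type*} [NormedAddCommGroup X] [InnerProductSpace ℝ X]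

/-- The set `A_μ` of points at which the derivative of `T` has eigenvalue `μ`. -/
def eigenvalueLocus (T : X → X) (μ : ℝ) : Set X :=
  {x | ∃ y : X, y ≠ 0 ∧ fderiv ℝ T x y = μ • y}

/-- The set `Γ` of pairs `(x, y)` such that the quadratic form of `T'(x)` is negative at `y`. -/
def negativePairs (T : X → X) : Set (X × X) :=
  {p | ⟪fderiv ℝ T p.1 p.2, p.2⟫_ℝ < 0}

/-- The infimum over `Γ` of the Rayleigh quotients of the derivatives of `T`, with values in the
extended reals: it may be `⊥`, and is `⊤` when `Γ` is empty. -/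
noncomputable def negativeRayleighInf (T : X → X) : EReal :=
  ⨅ p : negativePairs T, ((⟪fderiv ℝ T p.1.1 p.1.2, p.1.2⟫_ℝ / ‖p.1.2‖ ^ 2 : ℝ) : EReal)

lemma mem_eigenvalueLocus_iff_hasEigenvalue {T : X → X} {μ : ℝ} {x : X} :
    x ∈ eigenvalueLocus T μ ↔ End.HasEigenvalue (fderiv ℝ T x).toLinearMap μ := by
  refine ⟨fun ⟨y, hy, hxy⟩ => End.hasEigenvalue_of_hasEigenvector
    ⟨End.mem_eigenspace_iff.2 hxy, hy⟩, fun h => ?_⟩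
  obtain ⟨y, hy⟩ := h.exists_hasEigenvector
  exact ⟨y, hy.2, hy.apply_eq_smul⟩

lemma norm_pos_of_mem_negativePairs {T : X → X} {x v : X} (h : (x, v) ∈ negativePairs T) :
    0 < ‖v‖ := by
  refine norm_pos_iff.2 ?_
  rintro rfl
  simp [negativePairs] at h

lemma negativePairs_nonempty_of_eigenvalueLocus_nonempty {T : X → X} {μ : ℝ} (hμ : μ < 0)
    (h : (eigenvalueLocus T μ).Nonempty) : (negativePairs T).Nonempty := by
  obtain ⟨x, y, hy, hxy⟩ := h
  refine ⟨(x, y), ?_⟩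
  simpa [negativePairs, hxy, real_inner_smul_left]
    using mul_neg_of_neg_of_pos hμ (pow_pos (norm_pos_iff.2 hy) 2)

lemma negativeRayleighInf_lt_zero {T : X → X} (h : (negativePairs T).Nonempty) :
    negativeRayleighInf T < 0 := by
  obtain ⟨⟨x, v⟩, hxv⟩ := h
  refine iInf_lt_iff.2 ⟨⟨(x, v), hxv⟩, EReal.coe_neg'.2 ?_⟩
  exact div_neg_of_neg_of_pos hxv (pow_pos (norm_pos_of_mem_negativePairs hxv) 2)

lemma exists_inner_fderiv_lt_of_negativeRayleighInf_lt {T : X → X} {μ : ℝ}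
    (h : negativeRayleighInf T < μ) : ∃ x v, ⟪fderiv ℝ T x v, v⟫_ℝ < μ * ‖v‖ ^ 2 := by
  obtain ⟨⟨⟨x, v⟩, hxv⟩, hlt⟩ := iInf_lt_iff.1 h
  exact ⟨x, v, (div_lt_iff₀ (pow_pos (norm_pos_of_mem_negativePairs hxv) 2)).1
    (EReal.coe_lt_coe_iff.1 hlt)⟩

lemma not_monotone_iff_negativePairs_nonempty {T : X → X} (hT : Differentiable ℝ T) :
    (¬ ∀ x y, 0 ≤ ⟪T x - T y, x - y⟫_ℝ) ↔ (negativePairs T).Nonempty := by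
  simp [forall_inner_sub_nonneg_iff_forall_inner_fderiv_nonneg hT, negativePairs, Set.Nonempty]

variable [CompleteSpace X]

lemma exists_accPt_eigenvalueLocus_of_inner_fderiv (hdim : 1 < Module.rank ℝ X) {T : X → X}
    (hC1 : ContDiff ℝ 1 T) (hT : IsCompactMap T) {J : X → ℝ} (hJ : ∀ x, HasGradientAt J (T x) x)
    {μ : ℝ} (hμ : μ ≠ 0) (hbelow : ∃ x v, ⟪fderiv ℝ T x v, v⟫_ℝ < μ * ‖v‖ ^ 2)
    (habove : ∃ x, ∃ c > μ, ∀ v, c * ‖v‖ ^ 2 ≤ ⟪fderiv ℝ T x v, v⟫_ℝ) :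
    ∃ x ∈ eigenvalueLocus T μ, AccPt x (𝓟 (eigenvalueLocus T μ)) := by
  by_contra! hno
  have hdiscrete : IsDiscrete (eigenvalueLocus T μ) := ⟨discreteTopology_of_noAccPts hno⟩
  have hcont : Continuous (fderiv ℝ T) := hC1.continuous_fderiv one_ne_zero
  have hderiv (x : X) : HasFDerivAt T (fderiv ℝ T x) x :=
    (hC1.differentiable one_ne_zero x).hasFDerivAt
  have : Nontrivial X := rank_pos_iff_nontrivial.1 (zero_lt_one.trans hdim)
  have (x : X) : (𝓝[≠] x).NeBot := Module.punctured_nhds_neBot ℝ X x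
  have hdense := dense_compl_of_isDiscrete hdiscrete
  obtain ⟨a, ha_below, ha⟩ := hdense.inter_open_nonempty _
    ((isOpen_setOf_exists_inner_lt μ).preimage hcont) hbelow
  obtain ⟨b, hb_above, hb⟩ := hdense.inter_open_nonempty _
    ((isOpen_setOf_exists_lt_forall_mul_norm_sq_le_inner μ).preimage hcont) habove
  obtain ⟨_, ⟨x, hx, rfl⟩, heig⟩ := exists_hasEigenvalue_of_isPreconnected
    ((isPreconnected_compl_of_isDiscrete hdim hdiscrete).image _ hcont.continuousOn)
    (forall_mem_image.2 fun x _ => isCompactOperator_of_hasFDerivAt hT (hderiv x))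
    (forall_mem_image.2 fun x _ => isSymmetric_of_hasGradientAt hJ (hderiv x)) hμ
    ⟨_, mem_image_of_mem _ ha, ha_below⟩ ⟨_, mem_image_of_mem _ hb, hb_above⟩
  exact hx (mem_eigenvalueLocus_iff_hasEigenvalue.2 heig)

lemma exists_accPt_eigenvalueLocus (hdim : 1 < Module.rank ℝ X) {T : X → X}
    (hC1 : ContDiff ℝ 1 T) (hT : IsCompactMap T) {J : X → ℝ} (hJ : ∀ x, HasGradientAt J (T x) x)
    (hliminf : ∀ ε > 0, ∀ᶠ x in cobounded X, -ε ≤ J x / ‖x‖ ^ 2) {μ : ℝ}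
    (hinf : negativeRayleighInf T < μ) (hμ : μ < 0) :
    ∃ x ∈ eigenvalueLocus T μ, AccPt x (𝓟 (eigenvalueLocus T μ)) := by
  obtain ⟨x, hx⟩ := exists_forall_mul_norm_sq_le_inner_fderiv hT (hC1.differentiable one_ne_zero)
    hJ hliminf (ν := μ / 2) (by linarith)
  exact exists_accPt_eigenvalueLocus_of_inner_fderiv hdim hC1 hT hJ hμ.ne
    (exists_inner_fderiv_lt_of_negativeRayleighInf_lt hinf) ⟨x, μ / 2, by linarith, hx⟩

theorem nonmonotone_iff_negative_eigenvalue_iff_accumulation_general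
    (hdim : 1 < Module.rank ℝ X) {T : X → X} (hC1 : ContDiff ℝ 1 T) (hT : IsCompactMap T)
    {J : X → ℝ} (hJ : ∀ x, HasGradientAt J (T x) x)
    (hliminf : ∀ ε > 0, ∀ᶠ x in cobounded X, -ε ≤ J x / ‖x‖ ^ 2)
    {μt : EReal} (hμt : negativeRayleighInf T ≤ μt) :
    ((¬ ∀ x y, 0 ≤ ⟪T x - T y, x - y⟫_ℝ) ↔ ∃ μ < 0, (eigenvalueLocus T μ).Nonempty) ∧
    ((¬ ∀ x y, 0 ≤ ⟪T x - T y, x - y⟫_ℝ) ↔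
      (negativePairs T).Nonempty ∧ ∀ μ : ℝ, μt < μ → μ < 0 →
        ∃ x ∈ eigenvalueLocus T μ, AccPt x (𝓟 (eigenvalueLocus T μ))) := by
  have hacc (μ : ℝ) := exists_accPt_eigenvalueLocus (μ := μ) hdim hC1 hT hJ hliminf
  rw [not_monotone_iff_negativePairs_nonempty (hC1.differentiable one_ne_zero)]
  refine ⟨⟨fun hΓ => ?_, fun ⟨μ, hμ, hA⟩ =>
    negativePairs_nonempty_of_eigenvalueLocus_nonempty hμ hA⟩,
    fun hΓ => ⟨hΓ, fun μ hlt => hacc μ (hμt.trans_lt hlt)⟩, And.left⟩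
  obtain ⟨μ, hinf, hμ⟩ := EReal.lt_iff_exists_real_btwn.1 (negativeRayleighInf_lt_zero hΓ)
  obtain ⟨x, hx, -⟩ := hacc μ hinf (EReal.coe_neg'.1 hμ)
  exact ⟨μ, EReal.coe_neg'.1 hμ, x, hx⟩

end EigenvalueLocus

/-- Theorem 3: for a compact `C¹` potential operator `T` on a real Hilbert space `X` with
`dim X ≥ 3`, satisfying `liminf_{‖x‖→∞} J_T(x)/‖x‖² ≥ 0` and
`lim_{‖x‖→∞} ‖x + λ T(x)‖ = +∞` for all `λ > lam0` (for some `lam0 ≥ 0`), the following are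
equivalent: (i) `T` is not monotone; (ii) some `T'(x)` has a negative eigenvalue `μ`;
(iii) `Γ ≠ ∅` and for each `μ ∈ (μ̃, 0)` the set `A_μ` contains an accumulation point.
(When `lam0 = 0`, the term `-1/lam0` in the definition of `μ̃` is interpreted as `-∞`.) -/
theorem nonmonotone_iff_negative_eigenvalue_iff_accumulation
    {X : Type*} [NormedAddCommGroup X] [InnerProductSpace ℝ X] [CompleteSpace X]
    (hdim : 3 ≤ Module.rank ℝ X)
    (T : X → X)
    (hTC1 : ContDiff ℝ 1 T)
    (hTcompact : ∀ B : Set X, Bornology.IsBounded B → IsCompact (closure (T '' B)))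
    (JT : X → ℝ)
    (hJT : JT = fun x => ∫ s in (0:ℝ)..1, @inner ℝ X _ (T (s • x)) x)
    (hpot : ∀ x : X, HasFDerivAt JT (InnerProductSpace.toDual ℝ X (T x) : X →L[ℝ] ℝ) x)
    (h1 : ∀ ε > (0:ℝ), ∀ᶠ x in comap (fun x : X => ‖x‖) atTop, -ε ≤ JT x / ‖x‖ ^ 2)
    (lam0 : ℝ) (hlam0 : 0 ≤ lam0)
    (h2 : ∀ l : ℝ, lam0 < l →
      Tendsto (fun x : X => ‖x + l • T x‖) (comap (fun x : X => ‖x‖) atTop) atTop)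
    (Γ : Set (X × X))
    (hΓ : Γ = {p : X × X | @inner ℝ X _ (fderiv ℝ T p.1 p.2) p.2 < 0})
    (A : ℝ → Set X)
    (hA : A = fun μ => {x : X | ∃ y : X, y ≠ 0 ∧ fderiv ℝ T x y = μ • y})
    (μt : EReal)
    (hμt : μt = max (if lam0 = 0 then (⊥ : EReal) else ((-(1/lam0) : ℝ) : EReal))
      (⨅ p : Γ, ((@inner ℝ X _ (fderiv ℝ T (p : X × X).1 (p : X × X).2) (p : X × X).2
        / ‖(p : X × X).2‖ ^ 2 : ℝ) : EReal))) :
    ((¬ ∀ x y : X, 0 ≤ @inner ℝ X _ (T x - T y) (x - y)) ↔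
      (∃ μ : ℝ, μ < 0 ∧ (A μ).Nonempty)) ∧
    ((¬ ∀ x y : X, 0 ≤ @inner ℝ X _ (T x - T y) (x - y)) ↔
      (Γ.Nonempty ∧ ∀ μ : ℝ, μt < (μ : EReal) → μ < 0 →
        ∃ x ∈ A μ, AccPt x (𝓟 (A μ)))) := by
  subst hμt hA hΓ
  exact nonmonotone_iff_negative_eigenvalue_iff_accumulation_general
    (lt_of_lt_of_le (by norm_num) hdim) hTC1 hTcompact hpot (comap_norm_atTop (E := X) ▸ h1)
    (le_max_right _ _)
end

section
/- Let (X, ⟨·,·⟩) be a real Hilbert space with dim(X) ≥ 3, and let T : X → X be a compact potential operator of class C¹ such that liminf_{‖x‖→+∞} J_T(x)/‖x‖² ≥ 0 and such that, for some λ₀ ≥ 0, lim_{‖x‖→+∞} ‖x + λT(x)‖ = +∞ for every λ > λ₀. If T is not monotone, then there exist μ < 0, x ∈ X and y ∈ X \ {0} such that T'(x)(y) = μy; that is, some derivative T'(x) has a negative eigenvalue. -/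
open Filter Topology Set

/-!
For a potential operator the second derivative of the potential is `T'`, so each `T' x` is
self-adjoint; it is also compact, being a uniform limit on the unit ball of difference quotients of
a compact map. If no `T' x` had a negative eigenvalue, the spectral theorem would make every `T' x`
positive semidefinite, and the mean value theorem along segments would make `T` monotone.
-/

open scoped RealInnerProductSpace

theorem totallyBounded_of_forall_subset_thickening {α : Type*} [PseudoMetricSpace α] {s : Set α}
    (h : ∀ ε > 0, ∃ t, TotallyBounded t ∧ s ⊆ Metric.thickening ε t) : TotallyBounded s := by
  refine Metric.totallyBounded_iff.2 fun ε hε ↦ ?_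
  obtain ⟨t, ht, hst⟩ := h (ε / 2) (half_pos hε)
  obtain ⟨F, hF, htF⟩ := Metric.totallyBounded_iff.1 ht (ε / 2) (half_pos hε)
  refine ⟨F, hF, fun x hx ↦ ?_⟩
  obtain ⟨y, hyt, hxy⟩ := Metric.mem_thickening_iff.1 (hst hx)
  obtain ⟨z, hzF, hyz⟩ := mem_iUnion₂.1 (htF hyt)
  refine mem_iUnion₂.2 ⟨z, hzF, ?_⟩
  calc dist x z ≤ dist x y + dist y z := dist_triangle x y z
    _ < ε / 2 + ε / 2 := add_lt_add hxy hyz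
    _ = ε := add_halves ε

section CompactDerivative

variable {𝕜 E F : Type*} [NontriviallyNormedField 𝕜] [NormedAddCommGroup E] [NormedSpace 𝕜 E]
  [NormedAddCommGroup F] [NormedSpace 𝕜 F] {f : E → F} {f' : E →L[𝕜] F} {x : E}

theorem eventually_forall_add_smul_mem {s U : Set E} (hs : Bornology.IsBounded s) (hU : U ∈ 𝓝 x) :
    ∀ᶠ c in 𝓝 (0 : 𝕜), ∀ v ∈ s, x + c • v ∈ U := by
  have hV : (x + ·) ⁻¹' U ∈ 𝓝 (0 : E) :=
    (continuous_const_add x).continuousAt.preimage_mem_nhds (by simpa using hU)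
  have hs' := Bornology.isVonNBounded_iff_tendsto_smallSets_nhds.1
    (NormedSpace.isVonNBounded_of_isBounded 𝕜 hs)
  filter_upwards [tendsto_smallSets_iff.1 hs' _ hV] with c hc v hv
  exact hc (smul_mem_smul_set hv)

theorem tendstoUniformlyOn_inv_smul_sub (hf : HasFDerivAt f f' x) {s : Set E}
    (hs : Bornology.IsBounded s) :
    TendstoUniformlyOn (fun (c : 𝕜) v ↦ c⁻¹ • (f (x + c • v) - f x)) f' (𝓝[≠] 0) s := by
  refine Metric.tendstoUniformlyOn_iff.2 fun ε hε ↦ ?_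
  obtain ⟨R, hR, hsR⟩ := hs.exists_pos_norm_le
  have hremainder := hf.isLittleO.def (show 0 < ε / (2 * R) by positivity)
  filter_upwards [nhdsWithin_le_nhds (eventually_forall_add_smul_mem (𝕜 := 𝕜) hs hremainder),
    self_mem_nhdsWithin] with c hbound (hc : c ≠ 0) v hv
  have hrescale : c⁻¹ • (f (x + c • v) - f x) - f' v
      = c⁻¹ • (f (x + c • v) - f x - f' (x + c • v - x)) := by
    rw [add_sub_cancel_left, map_smul, smul_sub c⁻¹ (_ - _), inv_smul_smul₀ hc]
  calc dist (f' v) (c⁻¹ • (f (x + c • v) - f x))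
      = ‖c‖⁻¹ * ‖f (x + c • v) - f x - f' (x + c • v - x)‖ := by
        rw [dist_comm, dist_eq_norm, hrescale, norm_smul, norm_inv]
    _ ≤ ‖c‖⁻¹ * (ε / (2 * R) * ‖x + c • v - x‖) := by gcongr; exact hbound v hv
    _ = ε / (2 * R) * ‖v‖ := by
        rw [add_sub_cancel_left, norm_smul]
        field_simp [norm_ne_zero_iff.2 hc]
    _ ≤ ε / (2 * R) * R := by gcongr; exact hsR v hv
    _ < ε := by field_simp; norm_num

theorem isCompactOperator_of_hasFDerivAt_s5 [CompleteSpace F] (hf : HasFDerivAt f f' x) {U : Set E}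
    (hU : U ∈ 𝓝 x) (hfU : TotallyBounded (f '' U)) : IsCompactOperator f' := by
  suffices h : TotallyBounded (f' '' Metric.ball 0 1) from
    (isCompactOperator_iff_isCompact_closure_image_ball (f' : E →ₗ[𝕜] F) one_pos).2
      (h.closure.isCompact_of_isClosed isClosed_closure)
  refine totallyBounded_of_forall_subset_thickening fun ε hε ↦ ?_
  have hquotient := Metric.tendstoUniformlyOn_iff.1
    (tendstoUniformlyOn_inv_smul_sub hf (Metric.isBounded_ball (x := 0) (r := 1))) ε hε
  have hmem := nhdsWithin_le_nhds (s := {0}ᶜ)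
    (eventually_forall_add_smul_mem (𝕜 := 𝕜) (Metric.isBounded_ball (x := 0) (r := 1)) hU)
  obtain ⟨c, hclose, hcU⟩ := (hquotient.and hmem).exists
  refine ⟨(fun z ↦ c⁻¹ • (z - f x)) '' (f '' U),
    hfU.image ((uniformContinuous_id.sub uniformContinuous_const).const_smul c⁻¹), ?_⟩
  rintro _ ⟨v, hv, rfl⟩
  exact Metric.mem_thickening_iff.2
    ⟨_, mem_image_of_mem _ (mem_image_of_mem f (hcU v hv)), hclose v hv⟩

end CompactDerivative

section Spectral

open Module.End

variable {𝕜 E : Type*} [RCLike 𝕜] [NormedAddCommGroup E] [InnerProductSpace 𝕜 E]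

theorem re_inner_apply_self_nonneg_of_mem_eigenspace {A : E →ₗ[𝕜] E} (hA : A.IsSymmetric)
    (hnonneg : ∀ μ : ℝ, HasEigenvalue A (μ : 𝕜) → 0 ≤ μ) {μ : 𝕜} {v : E}
    (hv : v ∈ eigenspace A μ) : 0 ≤ RCLike.re (inner 𝕜 (A v) v) := by
  rcases eq_or_ne v 0 with rfl | hv0
  · simp
  have hμ : HasEigenvalue A μ := hasEigenvalue_of_hasEigenvector ⟨hv, hv0⟩
  have hreal : (RCLike.re μ : 𝕜) = μ := RCLike.conj_eq_iff_re.1 (hA.conj_eigenvalue_eq_self hμ)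
  have hre : 0 ≤ RCLike.re μ := hnonneg _ (hreal.symm ▸ hμ)
  rw [hA, inner_product_apply_eigenvector (mem_eigenspace_iff.1 hv), ← hreal]
  norm_cast
  positivity

theorem re_inner_apply_self_nonneg_of_mem_iSup_eigenspace {A : E →ₗ[𝕜] E} (hA : A.IsSymmetric)
    (hnonneg : ∀ μ : ℝ, HasEigenvalue A (μ : 𝕜) → 0 ≤ μ) {v : E}
    (hv : v ∈ ⨆ μ, eigenspace A μ) : 0 ≤ RCLike.re (inner 𝕜 (A v) v) := by
  obtain ⟨f, hf, rfl⟩ := (Submodule.mem_iSup_iff_exists_finsupp _ _).1 hv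
  have hAf (μ : 𝕜) : A (f μ) ∈ eigenspace A μ := by
    rw [mem_eigenspace_iff.1 (hf μ)]
    exact Submodule.smul_mem _ μ (hf μ)
  have hdiagonal : inner 𝕜 (A (f.sum fun _ w ↦ w)) (f.sum fun _ w ↦ w)
      = ∑ μ ∈ f.support, inner 𝕜 (A (f μ)) (f μ) := by
    rw [Finsupp.sum, map_sum]
    exact hA.orthogonalFamily_eigenspaces.inner_sum (fun μ ↦ ⟨A (f μ), hAf μ⟩)
      (fun μ ↦ ⟨f μ, hf μ⟩) f.support
  rw [hdiagonal, map_sum]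
  exact Finset.sum_nonneg fun μ _ ↦
    re_inner_apply_self_nonneg_of_mem_eigenspace hA hnonneg (hf μ)

theorem isPositive_of_forall_hasEigenvalue_nonneg [CompleteSpace E] {A : E →L[𝕜] E}
    (hcompact : IsCompactOperator A) (hA : A.IsSymmetric)
    (hnonneg : ∀ μ : ℝ, HasEigenvalue (A : E →ₗ[𝕜] E) (μ : 𝕜) → 0 ≤ μ) : A.IsPositive := by
  refine ⟨hA, fun v ↦ ?_⟩
  have hdense : (⨆ μ, eigenspace (A : E →ₗ[𝕜] E) μ).topologicalClosure = ⊤ :=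
    Submodule.topologicalClosure_eq_top_iff.2
      (ContinuousLinearMap.orthogonalComplement_iSup_eigenspaces_eq_bot hcompact hA)
  have hclosed : IsClosed {w | 0 ≤ RCLike.re (inner 𝕜 (A w) w)} :=
    isClosed_le continuous_const (by fun_prop)
  have hv : v ∈ (⨆ μ, eigenspace (A : E →ₗ[𝕜] E) μ).topologicalClosure :=
    hdense ▸ Submodule.mem_top
  exact closure_minimal
    (fun w hw ↦ re_inner_apply_self_nonneg_of_mem_iSup_eigenspace hA hnonneg hw) hclosed hv

end Spectral

section Gradient

variable {X : Type*} [NormedAddCommGroup X] [InnerProductSpace ℝ X]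

theorem isSymmetric_of_hasGradientAt_of_hasFDerivAt [CompleteSpace X] {J : X → ℝ} {T : X → X}
    {T' : X →L[ℝ] X} {x : X} (hJ : ∀ᶠ z in 𝓝 x, HasGradientAt J (T z) z)
    (hT : HasFDerivAt T T' x) : T'.IsSymmetric := by
  have hJ'' : HasFDerivAt (fun z ↦ innerSL ℝ (T z)) ((innerSL ℝ).comp T') x :=
    (innerSL ℝ : X →L[ℝ] X →L[ℝ] ℝ).hasFDerivAt.comp x hT
  intro v w
  calc ⟪T' v, w⟫ = ⟪T' w, v⟫ :=
        second_derivative_symmetric_of_eventually (hJ.mono fun _ hz ↦ hz.hasFDerivAt) hJ'' v w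
    _ = ⟪v, T' w⟫ := real_inner_comm _ _

theorem inner_sub_sub_nonneg_of_hasFDerivWithinAt {s : Set X} (hs : Convex ℝ s) {T : X → X}
    {T' : X → X →L[ℝ] X} (hT : ∀ z ∈ s, HasFDerivWithinAt T (T' z) s z)
    (hT' : ∀ z ∈ s, ∀ v, 0 ≤ ⟪T' z v, v⟫) {x y : X} (hx : x ∈ s) (hy : y ∈ s) :
    0 ≤ ⟪T x - T y, x - y⟫ := by
  have hderiv (z : X) (hz : z ∈ s) : HasFDerivWithinAt (fun z ↦ ⟪x - y, T z⟫)
      ((innerSL ℝ (x - y)).comp (T' z)) s z :=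
    (innerSL ℝ (x - y)).hasFDerivAt.comp_hasFDerivWithinAt z (hT z hz)
  obtain ⟨z, hz, hmean⟩ := domain_mvt hderiv hs hy hx
  calc 0 ≤ ⟪T' z (x - y), x - y⟫ := hT' z (hs.segment_subset hy hx hz) _
    _ = ⟪x - y, T x⟫ - ⟪x - y, T y⟫ := by rw [hmean, real_inner_comm]; rfl
    _ = ⟪T x - T y, x - y⟫ := by rw [← inner_sub_right, real_inner_comm]

end Gradient

theorem nonmonotone_implies_negative_eigenvalue_general
    {X : Type*} [NormedAddCommGroup X] [InnerProductSpace ℝ X] [CompleteSpace X]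
    {T : X → X} {J : X → ℝ} (hT : Differentiable ℝ T)
    (hcompact : ∀ x, ∃ U ∈ 𝓝 x, TotallyBounded (T '' U))
    (hJ : ∀ x, HasGradientAt J (T x) x) (hmono : ¬ ∀ x y, 0 ≤ ⟪T x - T y, x - y⟫) :
    ∃ μ : ℝ, μ < 0 ∧ ∃ x y : X, y ≠ 0 ∧ fderiv ℝ T x y = μ • y := by
  by_contra! hno
  have hderiv (x : X) : HasFDerivAt T (fderiv ℝ T x) x := (hT x).hasFDerivAt
  have hpositive (x : X) : (fderiv ℝ T x).IsPositive := by
    obtain ⟨U, hU, hTU⟩ := hcompact x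
    refine isPositive_of_forall_hasEigenvalue_nonneg
      (isCompactOperator_of_hasFDerivAt_s5 (hderiv x) hU hTU)
      (isSymmetric_of_hasGradientAt_of_hasFDerivAt (.of_forall hJ) (hderiv x)) fun μ hμ ↦ ?_
    obtain ⟨y, hy⟩ := hμ.exists_hasEigenvector
    exact not_lt.1 fun hneg ↦ hno μ hneg x y hy.2 hy.apply_eq_smul
  exact hmono fun x y ↦ inner_sub_sub_nonneg_of_hasFDerivWithinAt convex_univ
    (fun z _ ↦ (hderiv z).hasFDerivWithinAt) (fun z _ ↦ (hpositive z).2) (mem_univ x) (mem_univ y)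

/-- (i) ⇒ (ii) of Theorem 3: for a compact `C¹` potential operator `T` on a real Hilbert
space `X` with `dim X ≥ 3`, satisfying `liminf_{‖x‖→∞} J_T(x)/‖x‖² ≥ 0` and
`lim_{‖x‖→∞} ‖x + λ T(x)‖ = +∞` for all `λ > λ₀` (for some `λ₀ ≥ 0`): if `T` is not
monotone, then some derivative `T'(x)` has a negative eigenvalue. -/
theorem nonmonotone_implies_negative_eigenvalue
    {X : Type*} [NormedAddCommGroup X] [InnerProductSpace ℝ X] [CompleteSpace X]
    (hdim : 3 ≤ Module.rank ℝ X)
    (T : X → X)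
    (hTC1 : ContDiff ℝ 1 T)
    (hTcompact : ∀ B : Set X, Bornology.IsBounded B → IsCompact (closure (T '' B)))
    (JT : X → ℝ)
    (hJT : JT = fun x => ∫ s in (0:ℝ)..1, @inner ℝ X _ (T (s • x)) x)
    (hpot : ∀ x : X, HasFDerivAt JT (InnerProductSpace.toDual ℝ X (T x) : X →L[ℝ] ℝ) x)
    (h1 : ∀ ε > (0:ℝ), ∀ᶠ x in comap (fun x : X => ‖x‖) atTop, -ε ≤ JT x / ‖x‖ ^ 2)
    (lam0 : ℝ) (hlam0 : 0 ≤ lam0)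
    (h2 : ∀ l : ℝ, lam0 < l →
      Tendsto (fun x : X => ‖x + l • T x‖) (comap (fun x : X => ‖x‖) atTop) atTop)
    (hnmono : ¬ ∀ x y : X, 0 ≤ @inner ℝ X _ (T x - T y) (x - y)) :
    ∃ μ : ℝ, μ < 0 ∧ ∃ x y : X, y ≠ 0 ∧ fderiv ℝ T x y = μ • y := by
  exact nonmonotone_implies_negative_eigenvalue_general (hTC1.differentiable one_ne_zero)
    (fun x ↦ ⟨_, Metric.ball_mem_nhds x one_pos,
      (hTcompact _ Metric.isBounded_ball).totallyBounded.subset subset_closure⟩) hpot hnmono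
end
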